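/- If P∞ is a positive definite symmetric fixed point of g (g(P∞) = P∞), then the set {P : P ≥ P∞} is invariant under both Riccati maps: for every positive definite symmetric P with P ≥ P∞ one has g(P) ≥ P∞ and h(P) ≥ P∞. -/

import Mathlib

open Matrix

/-- Time-update Riccati map `h(P) = A P Aᵀ + Q`. -/
def riccatiH {n : ℕ} (A Q P : Matrix (Fin n) (Fin n) ℝ) :
    Matrix (Fin n) (Fin n) ℝ := A * P * Aᵀ + Q

/-- Measurement-update Riccati map `g(P) = ((A P Aᵀ + Q)⁻¹ + 𝓘)⁻¹`. -/
noncomputable def riccatiG {n : ℕ} (A Q I P : Matrix (Fin n) (Fin n) ℝ) :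
    Matrix (Fin n) (Fin n) ℝ := ((A * P * Aᵀ + Q)⁻¹ + I)⁻¹

/-! Inversion reverses the Löwner order on positive definite matrices. The map `X ↦ (X⁻¹ + 𝓘)⁻¹`
is two inversions around a translation by `𝓘 ≥ 0`, so it is monotone and lies below the identity;
it carries `h(P)` to `g(P)`. Hence `P ≥ P∞` gives `g(P) ≥ g(P∞) = P∞` and
`h(P) ≥ h(P∞) ≥ g(P∞) = P∞`. -/

section Ring

variable {n R : Type*} [Ring R] [StarRing R]

theorem posDef_of_posSemidef_sub [PartialOrder R] [AddLeftMono R] {X Y : Matrix n n R}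
    (hX : X.PosDef) (hXY : (Y - X).PosSemidef) : Y.PosDef := by
  simpa only [add_sub_cancel] using hX.add_posSemidef hXY

/-- The time update `P ↦ A P Aᴴ + Q` of an error covariance; it is `riccatiH` over a general
star ring. -/
def timeUpdate [Fintype n] (A Q P : Matrix n n R) : Matrix n n R := A * P * Aᴴ + Q

theorem posSemidef_timeUpdate_sub_timeUpdate [PartialOrder R] [Fintype n] (A Q : Matrix n n R)
    {P₁ P₂ : Matrix n n R} (hP : (P₂ - P₁).PosSemidef) :
    (timeUpdate A Q P₂ - timeUpdate A Q P₁).PosSemidef := by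
  simpa only [timeUpdate, add_sub_add_right_eq_sub, mul_sub, sub_mul] using
    hP.mul_mul_conjTranspose_same A

theorem posDef_timeUpdate [PartialOrder R] [AddLeftMono R] [Fintype n] [DecidableEq n]
    {A Q P : Matrix n n R} (hA : IsUnit A) (hQ : Q.PosSemidef) (hP : P.PosDef) :
    (timeUpdate A Q P).PosDef :=
  (hP.mul_mul_conjTranspose_same (vecMul_injective_of_isUnit hA)).add_posSemidef hQ

end Ring

section Field

variable {n K : Type*} [Fintype n] [DecidableEq n] [Field K] [PartialOrder K] [StarRing K]
  [StarOrderedRing K]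

theorem posSemidef_inv_sub_inv {X Y : Matrix n n K} (hX : X.PosDef)
    (hXY : (Y - X).PosSemidef) : (X⁻¹ - Y⁻¹).PosSemidef := by
  have hY : Y.PosDef := posDef_of_posSemidef_sub hX hXY
  let _ := hX.isUnit.invertible
  let _ := hY.isUnit.invertible
  let _ := hX.inv.isUnit.invertible
  -- `X⁻¹ - Y⁻¹` and `Y - X` are the two Schur complements of this block matrix.
  have hblock : (fromBlocks Y 1 1ᴴ X⁻¹).PosSemidef := by
    rw [hX.inv.fromBlocks₂₂]
    simpa using hXY
  rw [hY.fromBlocks₁₁] at hblock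
  simpa using hblock

/-- The measurement update of an error covariance `X` by the information matrix `I`, so that
`riccatiG` is a time update followed by a measurement update. -/
noncomputable def measurementUpdate (I X : Matrix n n K) : Matrix n n K := (X⁻¹ + I)⁻¹

theorem posSemidef_sub_measurementUpdate {I X : Matrix n n K} (hI : I.PosSemidef)
    (hX : X.PosDef) : (X - measurementUpdate I X).PosSemidef := by
  have hX_inv_inv : X⁻¹⁻¹ = X := nonsing_inv_nonsing_inv X ((isUnit_iff_isUnit_det X).1 hX.isUnit)
  have hle : ((X⁻¹ + I) - X⁻¹).PosSemidef := by rwa [add_sub_cancel_left]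
  simpa only [measurementUpdate, hX_inv_inv] using posSemidef_inv_sub_inv hX.inv hle

theorem posSemidef_measurementUpdate_sub_measurementUpdate {I X Y : Matrix n n K}
    (hI : I.PosSemidef) (hX : X.PosDef) (hXY : (Y - X).PosSemidef) :
    (measurementUpdate I Y - measurementUpdate I X).PosSemidef := by
  have hY : Y.PosDef := posDef_of_posSemidef_sub hX hXY
  refine posSemidef_inv_sub_inv (hY.inv.add_posSemidef hI) ?_
  rw [add_sub_add_right_eq_sub]
  exact posSemidef_inv_sub_inv hX hXY

theorem riccati_upper_set_invariant_general {A Q I Pinf P : Matrix n n K} (hI : I.PosSemidef)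
    (hpred : (timeUpdate A Q Pinf).PosDef)
    (hfix : measurementUpdate I (timeUpdate A Q Pinf) = Pinf) (hP : (P - Pinf).PosSemidef) :
    (measurementUpdate I (timeUpdate A Q P) - Pinf).PosSemidef ∧
      (timeUpdate A Q P - Pinf).PosSemidef := by
  have htime := posSemidef_timeUpdate_sub_timeUpdate A Q hP
  have hmeas := posSemidef_measurementUpdate_sub_measurementUpdate hI hpred htime
  have hcorr := posSemidef_sub_measurementUpdate hI hpred
  rw [hfix] at hmeas hcorr
  exact ⟨hmeas, by simpa only [sub_add_sub_cancel] using htime.add hcorr⟩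

end Field

theorem riccatiH_eq_timeUpdate {n : ℕ} (A Q P : Matrix (Fin n) (Fin n) ℝ) :
    riccatiH A Q P = timeUpdate A Q P := by
  rw [riccatiH, timeUpdate, conjTranspose_eq_transpose_of_trivial]

theorem riccatiG_eq_measurementUpdate_timeUpdate {n : ℕ} (A Q I P : Matrix (Fin n) (Fin n) ℝ) :
    riccatiG A Q I P = measurementUpdate I (timeUpdate A Q P) := by
  rw [← riccatiH_eq_timeUpdate, riccatiG, measurementUpdate, riccatiH]

/-- If `P∞` is a positive definite fixed point of `g`, then
the set `{P : P ≥ P∞}` is invariant under both Riccati maps. -/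
theorem riccati_upper_set_invariant
    {n : ℕ} (hn : 1 ≤ n) (A Q I Pinf : Matrix (Fin n) (Fin n) ℝ)
    (hA : IsUnit A.det) (hQ : Q.PosSemidef) (hI : I.PosSemidef)
    (hPinf : Pinf.PosDef) (hfix : riccatiG A Q I Pinf = Pinf) :
    ∀ P : Matrix (Fin n) (Fin n) ℝ, P.PosDef → (P - Pinf).PosSemidef →
      (riccatiG A Q I P - Pinf).PosSemidef ∧
      (riccatiH A Q P - Pinf).PosSemidef := by
  intro P _ hP
  simp only [riccatiG_eq_measurementUpdate_timeUpdate, riccatiH_eq_timeUpdate] at hfix ⊢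
  have hpred := posDef_timeUpdate ((isUnit_iff_isUnit_det A).2 hA) hQ hPinf
  exact riccati_upper_set_invariant_general hI hpred hfix hP
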